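/- arXiv:1206.4667 — 6 statements merged into one kernel-verified Lean document; each statement's English description precedes it below -/
import Mathlib

section
/- Let pos and neg be natural numbers with pos > 0, and let n = pos + neg and skew π = pos / n. For any valid confusion matrix (tp, fp, fn, tn) for this data set with tp + fp > 0, the precision p = tp / (tp + fp) and recall r = tp / pos satisfy p ≥ π·r / (1 − π + π·r). -/
/-!
For fixed `tp`, precision decreases in `fp`, so it is smallest when every negative example is
predicted positive, that is, when `fp = neg`. The bound is this extreme value `tp / (tp + neg)`,
written in terms of skew and recall.
-/

theorem skew_mul_recall_div_eq_div_add {K : Type*} [Field K] {pos neg : K}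
    (hpos : pos ≠ 0) (hn : pos + neg ≠ 0) (tp : K) :
    pos / (pos + neg) * (tp / pos) /
        (1 - pos / (pos + neg) + pos / (pos + neg) * (tp / pos)) =
      tp / (tp + neg) := by
  have skew_mul_recall : pos / (pos + neg) * (tp / pos) = tp / (pos + neg) := by
    field_simp
  have one_sub_skew : 1 - pos / (pos + neg) = neg / (pos + neg) := by
    rw [one_sub_div hn, add_sub_cancel_left]
  rw [skew_mul_recall, one_sub_skew, ← add_div, div_div_div_cancel_right₀ hn, add_comm neg]

theorem precision_lower_bound_general {K : Type*} [Field K] [LinearOrder K]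
    [IsStrictOrderedRing K] {pos neg tp fp : K} (hpos : 0 < pos) (htp : 0 ≤ tp) (hfp : 0 ≤ fp)
    (hfp_le : fp ≤ neg) (hpred : 0 < tp + fp) :
    let n := pos + neg
    let π := pos / n
    let p := tp / (tp + fp)
    let r := tp / pos
    p ≥ π * r / (1 - π + π * r) := by
  intro n π p r
  have hn : 0 < n := add_pos_of_pos_of_nonneg hpos (hfp.trans hfp_le)
  calc π * r / (1 - π + π * r)
      = tp / (tp + neg) := skew_mul_recall_div_eq_div_add hpos.ne' hn.ne' tp
    _ ≤ p := div_le_div_of_nonneg_left htp hpred (by gcongr)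

/-- Any valid confusion matrix (tp+fn = pos, fp+tn = neg) with tp+fp > 0
satisfies precision ≥ π·r / (1 − π + π·r) where π = pos/n and r = tp/pos. -/
theorem precision_lower_bound
    (pos neg : ℕ) (hpos : 0 < pos)
    (tp fp fn tn : ℕ)
    (htp : tp + fn = pos) (hfp : fp + tn = neg)
    (hpred : 0 < tp + fp) :
    let n : ℝ := (pos : ℝ) + (neg : ℝ)
    let π : ℝ := (pos : ℝ) / n
    let p : ℝ := (tp : ℝ) / ((tp : ℝ) + (fp : ℝ))
    let r : ℝ := (tp : ℝ) / (pos : ℝ)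
    p ≥ π * r / (1 - π + π * r) :=
  precision_lower_bound_general (mod_cast hpos) tp.cast_nonneg fp.cast_nonneg
    (mod_cast Nat.le.intro hfp) (mod_cast hpred)
end

section
/- Let pos and neg be positive real numbers, n = pos + neg, and skew π = pos / n. For any real numbers r ∈ (0, 1] and p ∈ (0, 1] satisfying p ≥ π·r / (1 − π + π·r), there exist nonnegative real numbers tp, fp, fn, tn with tp + fn = pos, fp + tn = neg, tp / pos = r, and tp / (tp + fp) = p. That is, every point of PR space on or above the minimum precision curve is achievable by a valid (fractional) confusion matrix. -/
/-!
Recall `r` forces `tp = pos * r`, and precision `p` then forces the number of predicted positives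
to be `tp + fp = tp / p`. The bound `p ≤ 1` says that `0 ≤ fp`, and since the minimum precision
curve is the precision `tp / (tp + neg)` of the matrix with `fp = neg`, lying on or above it says
that `fp ≤ neg`.
-/

section

variable {K : Type*} [Field K]

/-- The minimum precision curve at skew `s`, as a function of the recall `r`. -/
def minPrecision (s r : K) : K :=
  s * r / (1 - s + s * r)

theorem minPrecision_skew {pos neg : K} (h : pos + neg ≠ 0) (r : K) :
    minPrecision (pos / (pos + neg)) r = pos * r / (pos * r + neg) := by
  have numerator_eq : pos / (pos + neg) * r = pos * r / (pos + neg) := div_mul_eq_mul_div ..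
  have denominator_eq :
      1 - pos / (pos + neg) + pos / (pos + neg) * r = (pos * r + neg) / (pos + neg) := by
    field_simp
    ring
  rw [minPrecision, denominator_eq, numerator_eq, div_div_div_cancel_right₀ h]

variable [LinearOrder K] [IsStrictOrderedRing K]

theorem exists_mem_Icc_div_add_eq {tp neg p : K} (htp : 0 < tp) (hneg : 0 ≤ neg)
    (hp : p ∈ Set.Icc (tp / (tp + neg)) 1) :
    ∃ fp ∈ Set.Icc 0 neg, tp / (tp + fp) = p := by
  obtain ⟨hle, hp1⟩ := hp
  have hp0 : 0 < p := (by positivity : 0 < tp / (tp + neg)).trans_le hle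
  have tp_le_predicted : tp ≤ tp / p := le_div_self htp.le hp0 hp1
  have predicted_le : tp / p ≤ tp + neg := (div_le_comm₀ hp0 (by positivity)).mpr hle
  refine ⟨tp / p - tp, ⟨sub_nonneg.mpr tp_le_predicted, sub_le_iff_le_add'.mpr predicted_le⟩, ?_⟩
  rw [add_sub_cancel, div_div_cancel₀ htp.ne']

theorem achievable_of_above_min_curve_general {pos neg r p : K} (hpos : 0 < pos) (hneg : 0 ≤ neg)
    (hr0 : 0 < r) (hr1 : r ≤ 1) (hp1 : p ≤ 1)
    (hbound : minPrecision (pos / (pos + neg)) r ≤ p) :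
    ∃ tp fp fn tn : K,
      0 ≤ tp ∧ 0 ≤ fp ∧ 0 ≤ fn ∧ 0 ≤ tn ∧
      tp + fn = pos ∧ fp + tn = neg ∧
      tp / pos = r ∧ tp / (tp + fp) = p := by
  rw [minPrecision_skew (by positivity)] at hbound
  have htp : 0 < pos * r := mul_pos hpos hr0
  have htp_le : pos * r ≤ pos := mul_le_of_le_one_right hpos.le hr1
  obtain ⟨fp, ⟨hfp0, hfp_le⟩, hprecision⟩ :=
    exists_mem_Icc_div_add_eq htp hneg ⟨hbound, hp1⟩
  exact ⟨pos * r, fp, pos - pos * r, neg - fp, htp.le, hfp0, sub_nonneg.mpr htp_le,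
    sub_nonneg.mpr hfp_le, add_sub_cancel _ _, add_sub_cancel _ _,
    mul_div_cancel_left₀ r hpos.ne', hprecision⟩

end

/-- Every PR-space point (r, p) with r, p ∈ (0,1] on or above the minimum
precision curve is achievable by a valid fractional confusion matrix. -/
theorem achievable_of_above_min_curve
    (pos neg : ℝ) (hpos : 0 < pos) (hneg : 0 < neg)
    (r p : ℝ) (hr0 : 0 < r) (hr1 : r ≤ 1) (hp0 : 0 < p) (hp1 : p ≤ 1)
    (hbound : p ≥ (pos / (pos + neg)) * r /
      (1 - pos / (pos + neg) + (pos / (pos + neg)) * r)) :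
    ∃ tp fp fn tn : ℝ,
      0 ≤ tp ∧ 0 ≤ fp ∧ 0 ≤ fn ∧ 0 ≤ tn ∧
      tp + fn = pos ∧ fp + tn = neg ∧
      tp / pos = r ∧ tp / (tp + fp) = p :=
  achievable_of_above_min_curve_general hpos hneg.le hr0 hr1 hp1 hbound
end

section
/- Let pos and neg be positive real numbers, n = pos + neg, and skew π = pos / n. For any real number p with 0 < p < π, the PR-space point with recall r = 1 and precision p is not achievable: there is no tuple of nonnegative real numbers (tp, fp, fn, tn) with tp + fn = pos, fp + tn = neg, tp / pos = 1, and tp / (tp + fp) = p. In particular, for every π ∈ (0,1) there exist unachievable points in PR space. -/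
section

variable {K : Type*} [Field K] [LinearOrder K] [IsStrictOrderedRing K]

theorem truePos_div_add_neg_le_precision {tp fp neg : K}
    (htp : 0 < tp) (hfp : 0 ≤ fp) (hfp_le : fp ≤ neg) :
    tp / (tp + neg) ≤ tp / (tp + fp) :=
  div_le_div_of_nonneg_left htp.le (add_pos_of_pos_of_nonneg htp hfp)
    (add_le_add_right hfp_le tp)

/-- The bound on `p`, which is `π r / (1 - π + π r)` in terms of the skew `π`, is the precision
at recall `r` of the worst case, in which every negative example is a false positive. -/
theorem unachievable_point_exists_general {pos neg r p : K} (hpos : 0 < pos) (hr : 0 < r)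
    (hp : p < r * pos / (r * pos + neg)) :
    ¬ ∃ tp fp fn tn : K,
        0 ≤ tp ∧ 0 ≤ fp ∧ 0 ≤ fn ∧ 0 ≤ tn ∧
        tp + fn = pos ∧ fp + tn = neg ∧
        tp / pos = r ∧ tp / (tp + fp) = p := by
  rintro ⟨tp, fp, fn, tn, -, hfp, -, htn, -, hneg, hrecall, hprecision⟩
  have htp : tp = r * pos := (div_eq_iff hpos.ne').mp hrecall
  have htp_pos : 0 < tp := htp ▸ mul_pos hr hpos
  have hfp_le : fp ≤ neg := hneg ▸ le_add_of_nonneg_right htn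
  rw [← htp] at hp
  exact hp.not_ge (hprecision ▸ truePos_div_add_neg_le_precision htp_pos hfp hfp_le)

end

/-- For 0 < p < π, the PR-space point with recall 1 and precision p is not
achievable by any valid fractional confusion matrix. -/
theorem unachievable_point_exists
    (pos neg : ℝ) (hpos : 0 < pos) (hneg : 0 < neg)
    (p : ℝ) (hp0 : 0 < p) (hpπ : p < pos / (pos + neg)) :
    ¬ ∃ tp fp fn tn : ℝ,
        0 ≤ tp ∧ 0 ≤ fp ∧ 0 ≤ fn ∧ 0 ≤ tn ∧
        tp + fn = pos ∧ fp + tn = neg ∧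
        tp / pos = 1 ∧ tp / (tp + fp) = p :=
  unachievable_point_exists_general hpos one_pos (by rwa [one_mul])
end

section
/- For any real number π with 0 < π < 1, the area of the unachievable region in PR space equals 1 + (1 − π)·ln(1 − π) / π; that is, ∫₀¹ π·r / (1 − π + π·r) dr = 1 + (1 − π)·ln(1 − π) / π. -/
open Set

section

variable {a b c d : ℝ}

theorem integral_sub_const_div_self (h : (0 : ℝ) ∉ uIcc a b) :
    ∫ u in a..b, (u - d) / u = b - a - d * Real.log (b / a) := by
  have ne_zero {u : ℝ} (hu : u ∈ uIcc a b) : u ≠ 0 := ne_of_mem_of_not_mem hu h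
  have inv_integrable : IntervalIntegrable (fun u : ℝ ↦ u⁻¹) MeasureTheory.volume a b :=
    intervalIntegral.intervalIntegrable_inv (fun _ ↦ ne_zero) continuousOn_id
  calc ∫ u in a..b, (u - d) / u
      = ∫ u in a..b, (1 - d * u⁻¹) :=
        intervalIntegral.integral_congr fun u hu ↦ by
          simp only [sub_div, div_self (ne_zero hu), div_eq_mul_inv d]
    _ = (∫ _ in a..b, (1 : ℝ)) - d * ∫ u in a..b, u⁻¹ := by
        rw [intervalIntegral.integral_sub intervalIntegrable_const (inv_integrable.const_mul d),
          intervalIntegral.integral_const_mul]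
    _ = b - a - d * Real.log (b / a) := by rw [integral_one, integral_inv h]

theorem integral_mul_div_const_add_mul (hc : c ≠ 0)
    (h : (0 : ℝ) ∉ uIcc (d + c * a) (d + c * b)) :
    ∫ x in a..b, c * x / (d + c * x)
      = b - a - d / c * Real.log ((d + c * b) / (d + c * a)) := by
  calc ∫ x in a..b, c * x / (d + c * x)
      = ∫ x in a..b, (d + c * x - d) / (d + c * x) := by simp only [add_sub_cancel_left]
    _ = c⁻¹ * ∫ u in (d + c * a)..(d + c * b), (u - d) / u :=
        intervalIntegral.integral_comp_add_mul (fun u ↦ (u - d) / u) hc d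
    _ = b - a - d / c * Real.log ((d + c * b) / (d + c * a)) := by
        rw [integral_sub_const_div_self h]
        field_simp
        ring

end

theorem aucpr_min_eq_general {π : ℝ} (h0 : π ≠ 0) (h1 : π < 1) :
    ∫ r in (0:ℝ)..1, π * r / (1 - π + π * r)
      = 1 + (1 - π) * Real.log (1 - π) / π := by
  have denom_at_zero : 1 - π + π * 0 = 1 - π := by ring
  have denom_at_one : 1 - π + π * 1 = 1 := by ring
  have zero_notMem : (0 : ℝ) ∉ uIcc (1 - π + π * 0) (1 - π + π * 1) := by
    rw [denom_at_zero, denom_at_one]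
    exact notMem_uIcc_of_lt (sub_pos.mpr h1) one_pos
  rw [integral_mul_div_const_add_mul h0 zero_notMem, denom_at_zero, denom_at_one,
    one_div, Real.log_inv]
  ring

/-- The area of the unachievable region in PR space:
∫₀¹ π·r/(1−π+π·r) dr = 1 + (1−π)·ln(1−π)/π. -/
theorem aucpr_min_eq
    (π : ℝ) (h0 : 0 < π) (h1 : π < 1) :
    ∫ r in (0:ℝ)..1, π * r / (1 - π + π * r)
      = 1 + (1 - π) * Real.log (1 - π) / π :=
  aucpr_min_eq_general h0.ne' h1
end

section
/- For every real number π with 0 < π < 1, the minimum AUCPR satisfies 0 < 1 + (1 − π)·ln(1 − π) / π < 1. -/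
/-- For every skew π ∈ (0,1), the minimum AUCPR lies strictly between 0 and 1. -/
theorem aucpr_min_mem_Ioo
    (π : ℝ) (h0 : 0 < π) (h1 : π < 1) :
    0 < 1 + (1 - π) * Real.log (1 - π) / π ∧
    1 + (1 - π) * Real.log (1 - π) / π < 1 := by
  have one_sub_pos : 0 < 1 - π := sub_pos.mpr h1
  have one_sub_lt_one : 1 - π < 1 := sub_lt_self 1 h0
  have mul_log_neg : (1 - π) * Real.log (1 - π) < 0 :=
    Real.mul_log_neg one_sub_pos one_sub_lt_one
  have neg_lt_mul_log : -π < (1 - π) * Real.log (1 - π) := by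
    linarith [Real.self_sub_one_lt_mul_log one_sub_pos.le one_sub_lt_one.ne]
  constructor
  · have neg_one_lt_div : -1 < (1 - π) * Real.log (1 - π) / π := by
      rwa [lt_div_iff₀ h0, neg_one_mul]
    exact neg_lt_iff_pos_add'.mp neg_one_lt_div
  · exact add_lt_of_neg_right 1 (div_neg_of_neg_of_pos mul_log_neg h0)
end

section
/- The minimum AUCPR is strictly increasing in the skew: the function π ↦ 1 + (1 − π)·ln(1 − π) / π is strictly monotonically increasing on the interval (0, 1). -/
/-!
Up to the additive constant `1` and a sign, the minimum AUCPR at skew `π` is the slope of the secant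
of `x ↦ x * log x` through the points at `1` and `1 - π`. Strict convexity makes this slope strictly
increasing in `1 - π`.
-/

theorem strictMonoOn_slope_of_strictConvexOn {𝕜 : Type*} [Field 𝕜] [LinearOrder 𝕜]
    [IsStrictOrderedRing 𝕜] {s : Set 𝕜} {f : 𝕜 → 𝕜} {a : 𝕜} (hf : StrictConvexOn 𝕜 s f)
    (ha : a ∈ s) : StrictMonoOn (slope f a) (s \ {a}) := by
  intro x hx y hy hxy
  simpa only [slope_def_field] using hf.secant_strict_mono ha hx.1 hy.1 hx.2 hy.2 hxy

theorem slope_mul_log_one_one_sub (π : ℝ) :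
    slope (fun x : ℝ => x * Real.log x) 1 (1 - π) = -((1 - π) * Real.log (1 - π) / π) := by
  rw [slope_def_field, Real.log_one, mul_zero, sub_zero, sub_sub_cancel_left, div_neg]

theorem aucpr_min_strictMonoOn_general :
    StrictMonoOn (fun π : ℝ => 1 + (1 - π) * Real.log (1 - π) / π) (Set.Iic 1 \ {0}) := by
  have slope_strictMonoOn :
      StrictMonoOn (slope (fun x : ℝ => x * Real.log x) 1) (Set.Ici 0 \ {1}) :=
    strictMonoOn_slope_of_strictConvexOn Real.strictConvexOn_mul_log (Set.mem_Ici.2 zero_le_one)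
  have one_sub_strictAntiOn : StrictAntiOn (fun π : ℝ => 1 - π) (Set.Iic 1 \ {0}) :=
    fun _ _ _ _ h => sub_lt_sub_left h 1
  have one_sub_mapsTo :
      Set.MapsTo (fun π : ℝ => 1 - π) (Set.Iic 1 \ {0}) (Set.Ici 0 \ {1}) :=
    fun _ hπ => ⟨Set.mem_Ici.2 (sub_nonneg.2 hπ.1), fun h => hπ.2 (sub_eq_self.1 h)⟩
  simpa only [Function.comp_apply, slope_mul_log_one_one_sub, neg_neg] using
    (slope_strictMonoOn.comp_strictAntiOn one_sub_strictAntiOn one_sub_mapsTo).neg.const_add 1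

/-- The minimum AUCPR is strictly increasing in the skew on (0, 1). -/
theorem aucpr_min_strictMonoOn :
    StrictMonoOn (fun π : ℝ => 1 + (1 - π) * Real.log (1 - π) / π)
      (Set.Ioo 0 1) :=
  aucpr_min_strictMonoOn_general.mono fun _ hπ => ⟨hπ.2.le, hπ.1.ne'⟩
end
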